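/- There exist a real ρ > 1, positive reals η and r, an integer N and a real K with 0 < K < 1/8 such that for every n ≥ N and every x ∈ [−K, K], the probability that Z_n^x([−K, K]) > η·ρ^n is at least r. -/

import Mathlib

open MeasureTheory ProbabilityTheory

/-- Words over the alphabet `{1,2}` (represented as `Fin 2`), indexing the nodes of the
binary tree of the construction.  A word `i :: w` is a child of the word `w`. -/
abbrev LarssonWord := List (Fin 2)

/-- The left endpoint of the level-`w.length` interval of Larsson's random Cantor set
indexed by the word `w`, given the family `u` of (realized) uniform random variables.
The level-0 interval is `[0,1]`; if `I_w = [α, α + a^n]` is a level-`n` interval, its two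
level-`(n+1)` subintervals are `[α + a^n (b + U), α + a^n (b + U) + a^(n+1)]` and
`[α + a^n (1/2 + a/2 + U'), α + a^n (1/2 + a/2 + U') + a^(n+1)]`. -/
noncomputable def larssonLeft (a b : ℝ) (u : LarssonWord → ℝ) : LarssonWord → ℝ
  | [] => 0
  | (i :: w) => larssonLeft a b u w +
      a ^ w.length * ((if i = 0 then b else 1 / 2 + a / 2) + u (i :: w))

/-- `C^n`: the union of the `2^n` level-`n` intervals. -/
noncomputable def larssonLevel (a b : ℝ) (u : LarssonWord → ℝ) (n : ℕ) : Set ℝ :=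
  ⋃ w ∈ {w : LarssonWord | w.length = n},
    Set.Icc (larssonLeft a b u w) (larssonLeft a b u w + a ^ n)

/-- Larsson's random Cantor set `C = ⋂ n, C^n`. -/
noncomputable def larssonCantor (a b : ℝ) (u : LarssonWord → ℝ) : Set ℝ :=
  ⋂ n : ℕ, larssonLevel a b u n

/-- `Z_n^x(A)`: the number of pairs `(i, j)` of level-`n` words such that
`Φ(Q_{(i,j)}, x) = (u − v + x)/a^n ∈ A`, where `u` (resp. `v`) is the left endpoint of the
level-`n` interval of `C₁` (resp. `C₂`) indexed by `i` (resp. `j`). -/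
noncomputable def larssonZ (a b : ℝ) (u₁ u₂ : LarssonWord → ℝ) (n : ℕ) (x : ℝ)
    (A : Set ℝ) : ℕ :=
  Nat.card {p : LarssonWord × LarssonWord //
    p.1.length = n ∧ p.2.length = n ∧
    (larssonLeft a b u₁ p.1 - larssonLeft a b u₂ p.2 + x) / a ^ n ∈ A}

/-!
Fix `κ < 1`, write `Z` for counts with `A = [-κ, κ]`, and condition on the shifts up to level `n`.
Left endpoints of distinct level-`n` intervals of one Cantor set differ by at least `2aⁿ`, so no two
surviving squares share a row or a column, and they evolve independently: each is a fresh copy of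
the process, seen from a point of `[-κ, κ]`. Hence if `E exp (-s Z_m^y) ≤ exp (-2s)` for all small
`s ≥ 0` and all `y ∈ [-κ, κ]`, then `E exp (-s Z_{m+n}^x) ≤ E exp (-2s Z_n^x)`. Iterating, and then
applying Markov's inequality, gives `Z_{jm+l}^x > 2ʲ` with uniformly positive probability.

The hypothesis on a block follows from a large mean, since `exp (-v) ≤ 1 - v/2` on `[0, 1]`. For the
mean, count only the squares reached from the root by `k + 1` leftmost steps in both sets, then
arbitrary ones. The deterministic offsets of the leftmost steps cancel in the gap of such a square,
and for `aᵏ ≤ t/16` the first two shifts are all that is left of it up to an independent term of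
size less than `7t/12`. They therefore place the gap in a window of size `aᵐ` with probability of
order `aᵐ`, so `E Z_m^y` is at least of order `(4a)ᵐ`, which is unbounded because `a > 1/4`.
-/

namespace Larsson

section ProductMeasures

variable {ι : Type*}

theorem measurable_setPiecewise {X : ι → Type*} [∀ i, MeasurableSpace (X i)] (S : Set ι)
    [DecidablePred (· ∈ S)] :
    Measurable fun z : (∀ i, X i) × (∀ i, X i) => S.piecewise z.1 z.2 := by
  refine measurable_pi_iff.2 fun i => ?_
  by_cases hi : i ∈ S <;> simp only [Set.piecewise, hi, if_true, if_false] <;> fun_prop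

theorem infinitePi_map_piecewise {X : ι → Type*} [∀ i, MeasurableSpace (X i)]
    (μ : ∀ i, Measure (X i)) [∀ i, IsProbabilityMeasure (μ i)] (S : Set ι)
    [DecidablePred (· ∈ S)] :
    ((Measure.infinitePi μ).prod (Measure.infinitePi μ)).map (fun z => S.piecewise z.1 z.2) =
      Measure.infinitePi μ := by
  refine Measure.eq_infinitePi μ fun s t ht => ?_
  have hsplit : (fun z : (∀ i, X i) × (∀ i, X i) => S.piecewise z.1 z.2) ⁻¹' (s : Set ι).pi t =
      (({i ∈ s | i ∈ S} : Finset ι) : Set ι).pi t ×ˢ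
        (({i ∈ s | i ∉ S} : Finset ι) : Set ι).pi t := by
    ext z
    simp only [Set.mem_preimage, Set.mem_pi, Set.mem_prod, Finset.coe_filter, Finset.mem_coe,
      Set.mem_ofPred_eq, and_imp, ← forall_and]
    refine forall₂_congr fun i _ => ?_
    by_cases hi : i ∈ S <;> simp [hi]
  rw [Measure.map_apply (measurable_setPiecewise S)
      (.pi s.countable_toSet fun i _ => ht i), hsplit, Measure.prod_prod,
    Measure.infinitePi_pi μ fun i _ => ht i, Measure.infinitePi_pi μ fun i _ => ht i,
    Finset.prod_filter_mul_prod_filter_not]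

theorem iIndepFun_infinitePi_comp {X J κ : Type*} [MeasurableSpace X] (μ : ι → Measure X)
    [∀ i, IsProbabilityMeasure (μ i)] {e : J → κ → ι}
    (he : Function.Injective (Function.uncurry e)) :
    iIndepFun (fun j (ω : ι → X) => ω ∘ e j) (Measure.infinitePi μ) := by
  have hblock (j : J) : (Measure.infinitePi μ).map (fun ω => ω ∘ e j) =
      Measure.infinitePi fun k => μ (e j k) :=
    Measure.map_infinitePi_infinitePi_of_inj fun k l hkl =>
      congrArg Prod.snd (he (a₁ := (j, k)) (a₂ := (j, l)) hkl)
  rw [iIndepFun_iff_map_fun_eq_infinitePi_map fun j => by fun_prop]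
  simp only [hblock]
  rw [← Measure.infinitePi_map_curry fun j k => μ (e j k)]
  change _ = (Measure.infinitePi fun p => μ (Function.uncurry e p)).map _
  rw [← Measure.map_infinitePi_infinitePi_of_inj he, Measure.map_map (by fun_prop) (by fun_prop)]
  rfl

theorem ae_infinitePi_forall [Countable ι] {X : ι → Type*} [∀ i, MeasurableSpace (X i)]
    {μ : ∀ i, Measure (X i)} [∀ i, IsProbabilityMeasure (μ i)] {s : ∀ i, Set (X i)}
    (hs : ∀ i, ∀ᵐ y ∂μ i, y ∈ s i) : ∀ᵐ ω ∂Measure.infinitePi μ, ∀ i, ω i ∈ s i :=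
  ae_all_iff.2 fun i => (measurePreserving_eval_infinitePi μ i).quasiMeasurePreserving.ae (hs i)

end ProductMeasures

section Estimates

theorem exp_neg_le_one_sub_half {y : ℝ} (h0 : 0 ≤ y) (h1 : y ≤ 1) :
    Real.exp (-y) ≤ 1 - y / 2 := by
  have hpos : 0 < 1 + y := by linarith
  calc Real.exp (-y) = (Real.exp y)⁻¹ := Real.exp_neg y
    _ ≤ (1 + y)⁻¹ := inv_anti₀ hpos (by linarith [Real.add_one_le_exp y])
    _ ≤ 1 - y / 2 := by
      rw [inv_le_iff_one_le_mul₀ hpos]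
      nlinarith

theorem mgf_neg_le_exp_of_mem_Icc {Ω : Type*} [MeasurableSpace Ω] {μ : Measure Ω}
    [IsProbabilityMeasure μ] {X : Ω → ℝ} {M s : ℝ} (hX : AEMeasurable X μ)
    (hXM : ∀ᵐ ω ∂μ, X ω ∈ Set.Icc 0 M) (hs : 0 ≤ s) (hsM : s * M ≤ 1) :
    mgf X μ (-s) ≤ Real.exp (-(s / 2 * μ[X])) := by
  have hint : Integrable X μ := Integrable.of_mem_Icc 0 M hX hXM
  calc mgf X μ (-s) ≤ ∫ ω, (1 - s / 2 * X ω) ∂μ := by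
        refine integral_mono_ae (integrable_exp_mul_of_mem_Icc hX hXM)
          ((integrable_const 1).sub (hint.const_mul _)) ?_
        filter_upwards [hXM] with ω hω
        have h := exp_neg_le_one_sub_half (mul_nonneg hs hω.1)
          ((mul_le_mul_of_nonneg_left hω.2 hs).trans hsM)
        rw [neg_mul]
        linarith
    _ = 1 - s / 2 * μ[X] := by
        rw [integral_sub (integrable_const 1) (hint.const_mul _), integral_const_mul]
        simp
    _ ≤ Real.exp (-(s / 2 * μ[X])) := by
        linarith [Real.add_one_le_exp (-(s / 2 * μ[X]))]

theorem exists_geometric_le_two_pow {m : ℕ} (hm : m ≠ 0) :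
    ∃ ρ : ℝ, 1 < ρ ∧ ∃ η > (0 : ℝ), ∀ j l : ℕ, l < 2 * m → η * ρ ^ (j * m + l) ≤ 2 ^ j := by
  have hρ : ((2 : ℝ) ^ ((m : ℝ)⁻¹)) ^ m = 2 := Real.rpow_inv_natCast_pow zero_le_two hm
  have hρ1 : 1 < (2 : ℝ) ^ ((m : ℝ)⁻¹) :=
    Real.one_lt_rpow one_lt_two (inv_pos.2 (Nat.cast_pos.2 (Nat.pos_of_ne_zero hm)))
  refine ⟨_, hρ1, 1 / 4, by norm_num, fun j l hl => ?_⟩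
  have hl4 : ((2 : ℝ) ^ ((m : ℝ)⁻¹)) ^ l ≤ 4 := by
    calc _ ≤ ((2 : ℝ) ^ ((m : ℝ)⁻¹)) ^ (m * 2) :=
          pow_le_pow_right₀ hρ1.le (by omega)
      _ = 4 := by rw [pow_mul, hρ]; norm_num
  rw [pow_add, mul_comm j, pow_mul, hρ]
  nlinarith [pow_pos (zero_lt_two' ℝ) j]

theorem ofReal_le_measure_Icc {ν : Measure ℝ} {c t l r : ℝ} (hc : 0 ≤ c)
    (hν : ENNReal.ofReal c • volume.restrict (Set.Icc 0 t) ≤ ν) (hl : 0 ≤ l) (hr : r ≤ t) :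
    ENNReal.ofReal (c * (r - l)) ≤ ν (Set.Icc l r) := by
  refine le_of_eq_of_le ?_ (hν (Set.Icc l r))
  rw [Measure.smul_apply, Measure.restrict_eq_self _ (Set.Icc_subset_Icc hl hr), Real.volume_Icc,
    smul_eq_mul, ENNReal.ofReal_mul hc]

theorem ofReal_le_prod_abs_sub_add_le {ν : Measure ℝ} [SFinite ν] {c t η : ℝ} (w : ℝ) (hc : 0 ≤ c)
    (hη : 0 ≤ η) (hν : ENNReal.ofReal c • volume.restrict (Set.Icc 0 t) ≤ ν) :
    ENNReal.ofReal (c ^ 2 * (2 * η) * (t - 2 * η - |w|)) ≤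
      (ν.prod ν) {z | |z.1 - z.2 + w| ≤ η} := by
  set J := Set.Icc (η + max (-w) 0) (t - η - max w 0)
  have hsection : ∀ y ∈ J,
      ENNReal.ofReal (c * (2 * η)) ≤ ν (Prod.mk y ⁻¹' {z : ℝ × ℝ | |z.1 - z.2 + w| ≤ η}) := by
    intro y hy
    have hpre : Prod.mk y ⁻¹' {z : ℝ × ℝ | |z.1 - z.2 + w| ≤ η} =
        Set.Icc (y + w - η) (y + w + η) := by
      ext z
      simp only [Set.mem_preimage, Set.mem_ofPred_eq, Set.mem_Icc, abs_le]
      constructor <;> rintro ⟨h₁, h₂⟩ <;> constructor <;> linarith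
    rw [hpre, show 2 * η = y + w + η - (y + w - η) by ring]
    exact ofReal_le_measure_Icc hc hν (by linarith [hy.1, le_max_left (-w) 0])
      (by linarith [hy.2, le_max_left w 0])
  have hJ : ENNReal.ofReal (c * (t - 2 * η - |w|)) ≤ ν J := by
    rw [show t - 2 * η - |w| = t - η - max w 0 - (η + max (-w) 0) by
      rw [← posPart_def, ← negPart_def, ← posPart_add_negPart]; ring]
    exact ofReal_le_measure_Icc hc hν (by positivity) (by linarith [le_max_right w 0])
  calc ENNReal.ofReal (c ^ 2 * (2 * η) * (t - 2 * η - |w|))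
      = ENNReal.ofReal (c * (2 * η)) * ENNReal.ofReal (c * (t - 2 * η - |w|)) := by
        rw [← ENNReal.ofReal_mul (by positivity)]; ring_nf
    _ ≤ ENNReal.ofReal (c * (2 * η)) * ν J := by gcongr
    _ = ∫⁻ _ in J, ENNReal.ofReal (c * (2 * η)) ∂ν := (setLIntegral_const _ _).symm
    _ ≤ ∫⁻ y in J, ν (Prod.mk y ⁻¹' {z : ℝ × ℝ | |z.1 - z.2 + w| ≤ η}) ∂ν :=
        setLIntegral_mono' measurableSet_Icc hsection
    _ ≤ (ν.prod ν) {z | |z.1 - z.2 + w| ≤ η} := by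
        rw [Measure.prod_apply (measurableSet_le (by fun_prop) measurable_const)]
        exact setLIntegral_le_lintegral _ _

end Estimates

section Geometry

variable {a b : ℝ}

/-- Larsson's parameter `t`, the range of the random shifts. -/
noncomputable def spread (a b : ℝ) : ℝ := (1 - 3 * a - 2 * b) / 2

/-- The offset, relative to the length of the parent interval, of the child labelled `i` whose
random shift is `y`. -/
noncomputable def childOffset (a b : ℝ) (i : Fin 2) (y : ℝ) : ℝ :=
  (if i = 0 then b else 1 / 2 + a / 2) + y

theorem larssonLeft_cons (u : LarssonWord → ℝ) (i : Fin 2) (w : LarssonWord) :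
    larssonLeft a b u (i :: w) =
      larssonLeft a b u w + a ^ w.length * childOffset a b i (u (i :: w)) :=
  rfl

theorem childOffset_mem_Icc (ha : 0 ≤ a) (hb : 0 ≤ b) (i : Fin 2) {y : ℝ}
    (hy : y ∈ Set.Icc 0 (spread a b)) : childOffset a b i y ∈ Set.Icc 0 (1 - a) := by
  obtain ⟨h0, h1⟩ := hy
  unfold childOffset spread at *
  split_ifs <;> constructor <;> linarith

theorem two_mul_le_abs_childOffset_sub {i j : Fin 2} (hij : i ≠ j) {y z : ℝ}
    (hy : y ∈ Set.Icc 0 (spread a b)) (hz : z ∈ Set.Icc 0 (spread a b)) :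
    2 * a ≤ |childOffset a b i y - childOffset a b j z| := by
  obtain ⟨hy0, hy1⟩ := hy
  obtain ⟨hz0, hz1⟩ := hz
  rw [le_abs]
  unfold childOffset spread at *
  split_ifs with hi hj hj
  · exact absurd (hi.trans hj.symm) hij
  · right; linarith
  · left; linarith
  · omega

theorem two_mul_pow_le_abs_larssonLeft_sub (ha : 0 ≤ a) (ha1 : a ≤ 1) (hb : 0 ≤ b)
    {u : LarssonWord → ℝ} (hu : ∀ w, u w ∈ Set.Icc 0 (spread a b)) {v w : LarssonWord}
    (hlen : v.length = w.length) (hvw : v ≠ w) :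
    2 * a ^ w.length ≤ |larssonLeft a b u v - larssonLeft a b u w| := by
  induction v generalizing w with
  | nil => exact absurd (List.length_eq_zero_iff.1 hlen.symm).symm hvw
  | cons i v ih =>
    obtain _ | ⟨j, w⟩ := w
    · simp at hlen
    have hlen' : v.length = w.length := Nat.succ.inj hlen
    have hpow : 0 ≤ a ^ w.length := pow_nonneg ha _
    set d := childOffset a b i (u (i :: v)) - childOffset a b j (u (j :: w)) with hd
    have hdiff : larssonLeft a b u (i :: v) - larssonLeft a b u (j :: w) =
        larssonLeft a b u v - larssonLeft a b u w + a ^ w.length * d := by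
      rw [larssonLeft_cons, larssonLeft_cons, hlen', hd]
      ring
    rw [hdiff, List.length_cons, pow_succ]
    rcases eq_or_ne v w with rfl | hne
    · have hij : i ≠ j := fun h => hvw (h ▸ rfl)
      have hsep : 2 * a ≤ |d| := two_mul_le_abs_childOffset_sub hij (hu _) (hu _)
      rw [sub_self, zero_add, abs_mul, abs_of_nonneg hpow]
      nlinarith
    · have hsep := ih hlen' hne
      have hd_le : |d| ≤ 1 - a := by
        have hi := childOffset_mem_Icc ha hb i (hu (i :: v))
        have hj := childOffset_mem_Icc ha hb j (hu (j :: w))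
        rw [abs_le]
        constructor <;> linarith [hi.1, hi.2, hj.1, hj.2]
      have htri := abs_sub_abs_le_abs_add
        (larssonLeft a b u v - larssonLeft a b u w) (a ^ w.length * d)
      rw [abs_mul (a ^ w.length), abs_of_nonneg hpow] at htri
      nlinarith

-- Words grow at the head, so `w` is the ancestor and `v` the descent inside its interval.
theorem larssonLeft_append (u : LarssonWord → ℝ) (v w : LarssonWord) :
    larssonLeft a b u (v ++ w) =
      larssonLeft a b u w + a ^ w.length * larssonLeft a b (fun v => u (v ++ w)) v := by
  induction v with
  | nil => simp [larssonLeft]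
  | cons i v ih =>
    rw [List.cons_append, larssonLeft_cons, larssonLeft_cons, ih, List.length_append, pow_add,
      List.cons_append]
    ring

theorem larssonLeft_congr {u u' : LarssonWord → ℝ} {w : LarssonWord}
    (h : ∀ v, v ≠ [] → v.length ≤ w.length → u v = u' v) :
    larssonLeft a b u w = larssonLeft a b u' w := by
  induction w with
  | nil => rfl
  | cons i w ih =>
    rw [larssonLeft_cons, larssonLeft_cons, h _ (List.cons_ne_nil i w) le_rfl,
      ih fun v hv hvw => h v hv (hvw.trans (Nat.le_succ _))]

theorem measurable_larssonLeft (w : LarssonWord) :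
    Measurable fun u : LarssonWord → ℝ => larssonLeft a b u w := by
  induction w with
  | nil => exact measurable_const
  | cons i w ih =>
    simp only [larssonLeft_cons, childOffset]
    fun_prop

end Geometry

section Survivors

variable {a b κ x : ℝ} {m n : ℕ}

/-- The shifts of both Cantor sets; the first component of the index tells the copies apart. -/
abbrev Environment := Bool × LarssonWord → ℝ

/-- The difference of the left endpoints of a pair of intervals, one from each Cantor set. -/
noncomputable def pairGap (a b : ℝ) (u : Environment) (p : LarssonWord × LarssonWord) : ℝ :=
  larssonLeft a b (fun w => u (false, w)) p.1 - larssonLeft a b (fun w => u (true, w)) p.2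

/-- The pairs of level-`n` words. -/
def levelPairs (n : ℕ) : Finset (LarssonWord × LarssonWord) :=
  let words : Finset LarssonWord :=
    (Finset.univ : Finset (List.Vector (Fin 2) n)).map ⟨_, List.Vector.toList_injective⟩
  words ×ˢ words

theorem mem_levelPairs {p : LarssonWord × LarssonWord} :
    p ∈ levelPairs n ↔ p.1.length = n ∧ p.2.length = n := by
  have hword (w : LarssonWord) : (∃ v : List.Vector (Fin 2) n, v.toList = w) ↔ w.length = n :=
    ⟨fun ⟨v, hv⟩ => hv ▸ v.toList_length, fun hw => ⟨⟨w, hw⟩, rfl⟩⟩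
  simp [levelPairs, hword]

theorem card_levelPairs (n : ℕ) : (levelPairs n).card = 4 ^ n := by
  simp [levelPairs, ← mul_pow]

/-- The squares of level `n` that meet the `κ`-neighbourhood of the diagonal after a shift
by `x`: the pairs counted by `larssonZ` for `A = [-κ, κ]`. -/
noncomputable def survivors (a b κ : ℝ) (n : ℕ) (x : ℝ) (u : Environment) :
    Finset (LarssonWord × LarssonWord) :=
  {p ∈ levelPairs n | |pairGap a b u p + x| ≤ κ * a ^ n}

theorem mem_survivors {u : Environment} {p : LarssonWord × LarssonWord} :
    p ∈ survivors a b κ n x u ↔ p ∈ levelPairs n ∧ |pairGap a b u p + x| ≤ κ * a ^ n :=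
  Finset.mem_filter

theorem div_mem_Icc_iff_abs_le {y c : ℝ} (hc : 0 < c) :
    y / c ∈ Set.Icc (-κ) κ ↔ |y| ≤ κ * c := by
  rw [Set.mem_Icc, ← abs_le, abs_div, abs_of_pos hc, div_le_iff₀ hc]

theorem larssonZ_eq_card_survivors (ha : 0 < a) (u : Environment) :
    larssonZ a b (fun w => u (false, w)) (fun w => u (true, w)) n x (Set.Icc (-κ) κ) =
      (survivors a b κ n x u).card := by
  refine Nat.subtype_card _ fun p => ?_
  rw [mem_survivors, mem_levelPairs, and_assoc, div_mem_Icc_iff_abs_le (pow_pos ha n), pairGap]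

/-- The embedding of the index set onto the indices of the shifts below the square `p`: an
environment `u` is seen from `p` as `u ∘ descend p`. -/
def descend (p : LarssonWord × LarssonWord) (c : Bool × LarssonWord) : Bool × LarssonWord :=
  (c.1, c.2 ++ cond c.1 p.2 p.1)

/-- The environment that follows `u` up to level `n` and `u'` at deeper levels. -/
def glue (n : ℕ) (u u' : Environment) : Environment :=
  {c : Bool × LarssonWord | c.2.length ≤ n}.piecewise u u'

theorem glue_of_length_le {u u' : Environment} {c : Bool × LarssonWord} (hc : c.2.length ≤ n) :
    glue n u u' c = u c :=
  Set.piecewise_eq_of_mem {c : Bool × LarssonWord | c.2.length ≤ n} u u' hc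

theorem glue_of_lt_length {u u' : Environment} {c : Bool × LarssonWord} (hc : n < c.2.length) :
    glue n u u' c = u' c :=
  Set.piecewise_eq_of_notMem {c : Bool × LarssonWord | c.2.length ≤ n} u u' hc.not_ge

theorem larssonLeft_glue_append (u u' : Environment) (i : Bool) (v : LarssonWord) {w : LarssonWord}
    (hw : w.length = n) :
    larssonLeft a b (fun w => glue n u u' (i, w)) (v ++ w) =
      larssonLeft a b (fun w => u (i, w)) w +
        a ^ n * larssonLeft a b (fun v => u' (i, v ++ w)) v := by
  rw [larssonLeft_append, hw]
  congr 1
  · exact larssonLeft_congr fun v _ hv => glue_of_length_le (hv.trans_eq hw)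
  · refine congrArg _ (larssonLeft_congr fun v hv _ => glue_of_lt_length ?_)
    have := List.length_pos_iff.2 hv
    simp only [List.length_append]
    omega

theorem pairGap_glue_append (u u' : Environment) (q : LarssonWord × LarssonWord)
    {p : LarssonWord × LarssonWord} (hp : p ∈ levelPairs n) :
    pairGap a b (glue n u u') (q.1 ++ p.1, q.2 ++ p.2) =
      pairGap a b u p + a ^ n * pairGap a b (u' ∘ descend p) q := by
  obtain ⟨hp₁, hp₂⟩ := mem_levelPairs.1 hp
  rw [pairGap, larssonLeft_glue_append u u' false q.1 hp₁,
    larssonLeft_glue_append u u' true q.2 hp₂]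
  simp only [pairGap, Function.comp_apply, descend, cond_true, cond_false]
  ring

theorem sum_card_survivors_le (ha : 0 < a) (u u' : Environment) :
    ∑ p ∈ survivors a b κ n x u,
        (survivors a b κ m ((pairGap a b u p + x) / a ^ n) (u' ∘ descend p)).card ≤
      (survivors a b κ (m + n) x (glue n u u')).card := by
  rw [← Finset.card_sigma]
  refine Finset.card_le_card_of_injOn (fun r => (r.2.1 ++ r.1.1, r.2.2 ++ r.1.2)) ?_ ?_
  · rintro ⟨p, q⟩ hpq
    simp only [Finset.coe_sigma, Set.mem_sigma_iff, Finset.mem_coe, mem_survivors] at hpq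
    obtain ⟨⟨hp, -⟩, hq, hqx⟩ := hpq
    have han : 0 < a ^ n := pow_pos ha n
    rw [Finset.mem_coe, mem_survivors, pairGap_glue_append u u' q hp]
    constructor
    · rw [mem_levelPairs] at *
      simp only [List.length_append]
      omega
    · calc |pairGap a b u p + a ^ n * pairGap a b (u' ∘ descend p) q + x|
          = a ^ n * |pairGap a b (u' ∘ descend p) q + (pairGap a b u p + x) / a ^ n| := by
            rw [← abs_of_pos han, ← abs_mul, abs_of_pos han]
            congr 1
            field_simp
            ring
        _ ≤ a ^ n * (κ * a ^ m) := by gcongr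
        _ = κ * a ^ (m + n) := by ring
  · rintro ⟨p, q⟩ hpq ⟨p', q'⟩ hpq' heq
    simp only [Finset.coe_sigma, Set.mem_sigma_iff, Finset.mem_coe, mem_survivors,
      mem_levelPairs] at hpq hpq'
    obtain ⟨h₁, h₂⟩ := Prod.mk.inj heq
    obtain ⟨hq₁, hp₁⟩ := List.append_inj' h₁ (hpq.1.1.1.trans hpq'.1.1.1.symm)
    obtain ⟨hq₂, hp₂⟩ := List.append_inj' h₂ (hpq.1.1.2.trans hpq'.1.1.2.symm)
    obtain rfl := Prod.ext hp₁ hp₂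
    obtain rfl := Prod.ext hq₁ hq₂
    rfl

theorem eq_of_abs_larssonLeft_sub_le (ha : 0 < a) (ha1 : a ≤ 1) (hb : 0 ≤ b) (hκ : κ < 1)
    {u : LarssonWord → ℝ} (hu : ∀ w, u w ∈ Set.Icc 0 (spread a b)) {y : ℝ} {v w : LarssonWord}
    (hv : v.length = n) (hw : w.length = n) (hvy : |larssonLeft a b u v - y| ≤ κ * a ^ n)
    (hwy : |larssonLeft a b u w - y| ≤ κ * a ^ n) : v = w := by
  by_contra hne
  have hsep := two_mul_pow_le_abs_larssonLeft_sub ha.le ha1 hb hu (hv.trans hw.symm) hne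
  have htri := abs_sub_le (larssonLeft a b u v) y (larssonLeft a b u w)
  rw [abs_sub_comm y] at htri
  rw [hw] at hsep
  nlinarith [pow_pos ha n]

theorem injOn_fst_survivors (ha : 0 < a) (ha1 : a ≤ 1) (hb : 0 ≤ b) (hκ : κ < 1)
    {u : Environment} (hu : ∀ c, u c ∈ Set.Icc 0 (spread a b)) :
    Set.InjOn Prod.fst (survivors a b κ n x u : Set (LarssonWord × LarssonWord)) := by
  rintro ⟨v, w⟩ hp ⟨v', w'⟩ hp' (rfl : v = v')
  simp only [Finset.mem_coe, mem_survivors, mem_levelPairs, pairGap] at hp hp'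
  refine Prod.ext rfl (eq_of_abs_larssonLeft_sub_le
    (y := larssonLeft a b (fun w => u (false, w)) v + x) ha ha1 hb hκ (fun w => hu (true, w))
    hp.1.2 hp'.1.2 ?_ ?_)
  · rw [abs_sub_comm, add_sub_right_comm]; exact hp.2
  · rw [abs_sub_comm, add_sub_right_comm]; exact hp'.2

theorem injOn_snd_survivors (ha : 0 < a) (ha1 : a ≤ 1) (hb : 0 ≤ b) (hκ : κ < 1)
    {u : Environment} (hu : ∀ c, u c ∈ Set.Icc 0 (spread a b)) :
    Set.InjOn Prod.snd (survivors a b κ n x u : Set (LarssonWord × LarssonWord)) := by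
  rintro ⟨v, w⟩ hp ⟨v', w'⟩ hp' (rfl : w = w')
  simp only [Finset.mem_coe, mem_survivors, mem_levelPairs, pairGap] at hp hp'
  refine Prod.ext (eq_of_abs_larssonLeft_sub_le (y := larssonLeft a b (fun v => u (true, v)) w - x)
    ha ha1 hb hκ (fun w => hu (false, w)) hp.1.1 hp'.1.1 ?_ ?_) rfl
  · rw [sub_sub_eq_add_sub, add_sub_right_comm]; exact hp.2
  · rw [sub_sub_eq_add_sub, add_sub_right_comm]; exact hp'.2

theorem uncurry_descend_injective {T : Finset (LarssonWord × LarssonWord)}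
    (hT : T ⊆ levelPairs n) (hfst : Set.InjOn Prod.fst (T : Set (LarssonWord × LarssonWord)))
    (hsnd : Set.InjOn Prod.snd (T : Set (LarssonWord × LarssonWord))) :
    Function.Injective (Function.uncurry fun p : T => descend p.1) := by
  rintro ⟨⟨p, hp⟩, i, v⟩ ⟨⟨q, hq⟩, j, w⟩ heq
  obtain ⟨rfl, happ⟩ : i = j ∧ v ++ cond i p.2 p.1 = w ++ cond j q.2 q.1 := Prod.mk.inj heq
  have hpn := mem_levelPairs.1 (hT hp)
  have hqn := mem_levelPairs.1 (hT hq)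
  cases i
  · obtain ⟨rfl, h⟩ := List.append_inj' happ (hpn.1.trans hqn.1.symm)
    obtain rfl := hfst hp hq h
    rfl
  · obtain ⟨rfl, h⟩ := List.append_inj' happ (hpn.2.trans hqn.2.symm)
    obtain rfl := hsnd hp hq h
    rfl

end Survivors

section Branching

variable {a b κ x s s' : ℝ} {m n : ℕ}

/-- The number of surviving pairs, as a real random variable on environments. -/
noncomputable def survivorCount (a b κ : ℝ) (n : ℕ) (x : ℝ) (u : Environment) : ℝ :=
  (survivors a b κ n x u).card

theorem measurable_pairGap (p : LarssonWord × LarssonWord) :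
    Measurable fun u : Environment => pairGap a b u p :=
  ((measurable_larssonLeft p.1).comp (by fun_prop)).sub
    ((measurable_larssonLeft p.2).comp (by fun_prop))

theorem measurableSet_abs_pairGap_add_le (p : LarssonWord × LarssonWord) (x c : ℝ) :
    MeasurableSet {u : Environment | |pairGap a b u p + x| ≤ c} :=
  measurableSet_le ((measurable_pairGap p).add_const x).abs measurable_const

theorem survivorCount_eq_sum_indicator (u : Environment) :
    survivorCount a b κ n x u =
      ∑ p ∈ levelPairs n, {u | |pairGap a b u p + x| ≤ κ * a ^ n}.indicator 1 u := by
  simp [survivorCount, survivors, Set.indicator_apply]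

theorem measurable_survivorCount : Measurable (survivorCount a b κ n x) := by
  simp only [funext survivorCount_eq_sum_indicator]
  exact Finset.measurable_fun_sum _ fun p _ =>
    measurable_one.indicator (measurableSet_abs_pairGap_add_le p x _)

theorem survivorCount_mem_Icc (u : Environment) :
    survivorCount a b κ n x u ∈ Set.Icc 0 (4 ^ n) := by
  refine ⟨Nat.cast_nonneg _, ?_⟩
  rw [survivorCount]
  exact_mod_cast (Finset.card_filter_le _ _).trans_eq (card_levelPairs n)

/-- The law of an environment with independent shifts of law `ν`. -/
noncomputable abbrev environmentLaw (ν : Measure ℝ) : Measure Environment :=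
  Measure.infinitePi fun _ => ν

theorem integrable_exp_mul_survivorCount {Ω : Type*} [MeasurableSpace Ω] {μ : Measure Ω}
    [IsFiniteMeasure μ] {f : Ω → Environment} (hf : Measurable f) (s : ℝ) :
    Integrable (fun ω => Real.exp (s * survivorCount a b κ n x (f ω))) μ :=
  integrable_exp_mul_of_mem_Icc (measurable_survivorCount.comp hf).aemeasurable
    (.of_forall fun ω => survivorCount_mem_Icc (f ω))

variable {ν : Measure ℝ} [IsProbabilityMeasure ν]

theorem measurable_glue (n : ℕ) : Measurable fun z : Environment × Environment => glue n z.1 z.2 :=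
  measurable_setPiecewise _

theorem environmentLaw_map_glue (n : ℕ) :
    ((environmentLaw ν).prod (environmentLaw ν)).map (fun z => glue n z.1 z.2) =
      environmentLaw ν :=
  infinitePi_map_piecewise _ _

theorem map_comp_descend (p : LarssonWord × LarssonWord) :
    (environmentLaw ν).map (fun u => u ∘ descend p) = environmentLaw ν := by
  refine Measure.map_infinitePi_infinitePi_of_inj (P := fun _ => ν) ?_
  rintro ⟨i, v⟩ ⟨j, w⟩ h
  obtain ⟨rfl, h⟩ : i = j ∧ v ++ cond i p.2 p.1 = w ++ cond j p.2 p.1 := Prod.mk.inj h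
  rw [List.append_cancel_right h]

theorem mgf_survivorCount_glue_le (ha : 0 < a) (ha1 : a ≤ 1) (hb : 0 ≤ b) (hκ : κ < 1)
    (hs : 0 ≤ s)
    (hm : ∀ y ∈ Set.Icc (-κ) κ, mgf (survivorCount a b κ m y) (environmentLaw ν) (-s) ≤
      Real.exp (-s'))
    {u : Environment} (hu : ∀ c, u c ∈ Set.Icc 0 (spread a b)) :
    mgf (fun u' => survivorCount a b κ (m + n) x (glue n u u')) (environmentLaw ν) (-s) ≤
      Real.exp (-s' * survivorCount a b κ n x u) := by
  set T := survivors a b κ n x u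
  set Y : T → Environment → ℝ := fun p u' =>
    survivorCount a b κ m ((pairGap a b u p + x) / a ^ n) (u' ∘ descend p)
  have hYmeas (p : T) : Measurable (Y p) := measurable_survivorCount.comp (by fun_prop)
  have hYindep : iIndepFun Y (environmentLaw ν) :=
    (iIndepFun_infinitePi_comp _ (uncurry_descend_injective (Finset.filter_subset _ _)
      (injOn_fst_survivors ha ha1 hb hκ hu) (injOn_snd_survivors ha ha1 hb hκ hu))).comp _
        fun _ => measurable_survivorCount
  have hYmgf (p : T) : mgf (Y p) (environmentLaw ν) (-s) ≤ Real.exp (-s') := by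
    have hdescend : Measurable fun u' : Environment => u' ∘ descend p := by fun_prop
    refine le_of_eq_of_le ?_ (hm _ ((div_mem_Icc_iff_abs_le (pow_pos ha n)).2
      (mem_survivors.1 p.2).2))
    conv_rhs => rw [← map_comp_descend p.1]
    exact (mgf_map hdescend.aemeasurable
      (integrable_exp_mul_survivorCount measurable_id _).aestronglyMeasurable).symm
  have hsum (u' : Environment) :
      (∑ p, Y p) u' ≤ survivorCount a b κ (m + n) x (glue n u u') := by
    simp only [Finset.sum_apply, Y, survivorCount]
    rw [Finset.sum_coe_sort T fun p =>
      ((survivors a b κ m ((pairGap a b u p + x) / a ^ n) (u' ∘ descend p)).card : ℝ)]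
    exact_mod_cast sum_card_survivors_le ha u u'
  calc _ ≤ mgf (∑ p, Y p) (environmentLaw ν) (-s) :=
        mgf_anti_of_nonpos (.of_forall hsum) (neg_nonpos.2 hs)
          (hYindep.integrable_exp_mul_sum hYmeas fun p _ =>
            integrable_exp_mul_survivorCount (by fun_prop) _)
    _ = ∏ p, mgf (Y p) (environmentLaw ν) (-s) := hYindep.mgf_sum hYmeas _
    _ ≤ ∏ _p : T, Real.exp (-s') := Finset.prod_le_prod (fun _ _ => mgf_nonneg) fun p _ => hYmgf p
    _ = Real.exp (-s' * survivorCount a b κ n x u) := by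
      rw [Finset.prod_const, Finset.card_univ, Fintype.card_coe, ← Real.exp_nat_mul, mul_comm]
      rfl

theorem mgf_survivorCount_add_le (ha : 0 < a) (ha1 : a ≤ 1) (hb : 0 ≤ b) (hκ : κ < 1)
    (hν : ∀ᵐ y ∂ν, y ∈ Set.Icc 0 (spread a b)) (hs : 0 ≤ s)
    (hm : ∀ y ∈ Set.Icc (-κ) κ, mgf (survivorCount a b κ m y) (environmentLaw ν) (-s) ≤
      Real.exp (-s')) :
    mgf (survivorCount a b κ (m + n) x) (environmentLaw ν) (-s) ≤
      mgf (survivorCount a b κ n x) (environmentLaw ν) (-s') := by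
  have hint : Integrable (fun z : Environment × Environment =>
      Real.exp (-s * survivorCount a b κ (m + n) x (glue n z.1 z.2)))
      ((environmentLaw ν).prod (environmentLaw ν)) :=
    integrable_exp_mul_survivorCount (measurable_glue n) _
  calc _ = ∫ z, Real.exp (-s * survivorCount a b κ (m + n) x (glue n z.1 z.2))
        ∂(environmentLaw ν).prod (environmentLaw ν) := by
        conv_lhs => rw [← environmentLaw_map_glue n]
        exact mgf_map (measurable_glue n).aemeasurable
          (integrable_exp_mul_survivorCount measurable_id _).aestronglyMeasurable
    _ = ∫ u, mgf (fun u' => survivorCount a b κ (m + n) x (glue n u u')) (environmentLaw ν) (-s)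
        ∂environmentLaw ν := integral_prod _ hint
    _ ≤ mgf (survivorCount a b κ n x) (environmentLaw ν) (-s') := by
        refine integral_mono_ae hint.integral_prod_left
          (integrable_exp_mul_survivorCount measurable_id _) ?_
        filter_upwards [ae_infinitePi_forall fun _ => hν] with u hu
        exact mgf_survivorCount_glue_le ha ha1 hb hκ hs hm hu

theorem mgf_survivorCount_mul_add_le (ha : 0 < a) (ha1 : a ≤ 1) (hb : 0 ≤ b) (hκ : κ < 1)
    (hν : ∀ᵐ y ∂ν, y ∈ Set.Icc 0 (spread a b)) {s₀ : ℝ}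
    (hm : ∀ s ∈ Set.Icc 0 s₀, ∀ y ∈ Set.Icc (-κ) κ,
      mgf (survivorCount a b κ m y) (environmentLaw ν) (-s) ≤ Real.exp (-(2 * s)))
    (hs : s ∈ Set.Icc 0 s₀) (j l : ℕ) :
    mgf (survivorCount a b κ (j * m + l) x) (environmentLaw ν) (-(s / 2 ^ j)) ≤
      mgf (survivorCount a b κ l x) (environmentLaw ν) (-s) := by
  induction j with
  | zero => simp
  | succ j ih =>
    refine le_trans ?_ ih
    have hmem : s / 2 ^ (j + 1) ∈ Set.Icc 0 s₀ :=
      ⟨div_nonneg hs.1 (by positivity),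
        (div_le_self hs.1 (one_le_pow₀ one_le_two)).trans hs.2⟩
    have hhalf : 2 * (s / 2 ^ (j + 1)) = s / 2 ^ j := by
      rw [pow_succ]
      field_simp
    rw [← hhalf, Nat.succ_mul, add_right_comm, add_comm]
    exact mgf_survivorCount_add_le ha ha1 hb hκ hν hmem.1 (hm _ hmem)

end Branching

section MeanGrowth

variable {a b c κ x : ℝ} {ν : Measure ℝ} [IsProbabilityMeasure ν]

theorem larssonLeft_mem_Icc (ha : 0 ≤ a) (hb : 0 ≤ b) {u : LarssonWord → ℝ}
    (hu : ∀ w, u w ∈ Set.Icc 0 (spread a b)) (w : LarssonWord) :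
    larssonLeft a b u w ∈ Set.Icc 0 (1 - a ^ w.length) := by
  induction w with
  | nil => simp [larssonLeft]
  | cons i w ih =>
    have hpow : 0 ≤ a ^ w.length := pow_nonneg ha _
    obtain ⟨h0, h1⟩ := childOffset_mem_Icc ha hb i (hu (i :: w))
    rw [larssonLeft_cons, List.length_cons, pow_succ]
    exact ⟨add_nonneg ih.1 (mul_nonneg hpow h0), by nlinarith [ih.2]⟩

theorem abs_larssonLeft_sub_le (ha : 0 ≤ a) {u u' : LarssonWord → ℝ}
    (hu : ∀ w, u w ∈ Set.Icc 0 (spread a b)) (hu' : ∀ w, u' w ∈ Set.Icc 0 (spread a b))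
    (w : LarssonWord) :
    |larssonLeft a b u w - larssonLeft a b u' w| ≤
      spread a b * ∑ j ∈ Finset.range w.length, a ^ j := by
  induction w with
  | nil => simp [larssonLeft]
  | cons i w ih =>
    have hshift : |u (i :: w) - u' (i :: w)| ≤ spread a b := by
      have h := hu (i :: w)
      have h' := hu' (i :: w)
      exact abs_sub_le_iff.2 ⟨by linarith [h.2, h'.1], by linarith [h.1, h'.2]⟩
    calc |larssonLeft a b u (i :: w) - larssonLeft a b u' (i :: w)|
        = |(larssonLeft a b u w - larssonLeft a b u' w) +
            a ^ w.length * (u (i :: w) - u' (i :: w))| := by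
          simp only [larssonLeft_cons, childOffset]
          ring_nf
      _ ≤ spread a b * ∑ j ∈ Finset.range w.length, a ^ j + a ^ w.length * spread a b := by
          refine (abs_add_le _ _).trans (add_le_add ih ?_)
          rw [abs_mul, abs_of_nonneg (pow_nonneg ha _)]
          gcongr
      _ = spread a b * ∑ j ∈ Finset.range (i :: w).length, a ^ j := by
          rw [List.length_cons, Finset.sum_range_succ]
          ring

theorem abs_pairGap_le_one (ha : 0 ≤ a) (hb : 0 ≤ b) {u : Environment}
    (hu : ∀ c, u c ∈ Set.Icc 0 (spread a b)) (p : LarssonWord × LarssonWord) :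
    |pairGap a b u p| ≤ 1 := by
  have h₁ := larssonLeft_mem_Icc ha hb (fun w => hu (false, w)) p.1
  have h₂ := larssonLeft_mem_Icc ha hb (fun w => hu (true, w)) p.2
  have hpow₁ := pow_nonneg ha p.1.length
  have hpow₂ := pow_nonneg ha p.2.length
  exact abs_sub_le_iff.2 ⟨by linarith [h₁.2, h₂.1], by linarith [h₁.1, h₂.2]⟩

theorem pairGap_append {n : ℕ} (u : Environment) (q : LarssonWord × LarssonWord)
    {p : LarssonWord × LarssonWord} (hp : p ∈ levelPairs n) :
    pairGap a b u (q.1 ++ p.1, q.2 ++ p.2) =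
      pairGap a b u p + a ^ n * pairGap a b (u ∘ descend p) q := by
  simpa only [glue, Set.piecewise_same] using pairGap_glue_append u u q hp

theorem abs_pairGap_append_self_le (ha : 0 ≤ a) (ha3 : a ≤ 1 / 3) (hb : 0 ≤ b) {u : Environment}
    (hu : ∀ c, u c ∈ Set.Icc 0 (spread a b)) (q : LarssonWord × LarssonWord) (z : LarssonWord) :
    |pairGap a b u (q.1 ++ z, q.2 ++ z)| ≤ 3 / 2 * spread a b + a ^ z.length := by
  have hspread : 0 ≤ spread a b := (hu (false, [])).1.trans (hu (false, [])).2
  have hz : |pairGap a b u (z, z)| ≤ 3 / 2 * spread a b := by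
    have hgeom : ∑ j ∈ Finset.range z.length, a ^ j ≤ 3 / 2 := by
      have hsum := geom_sum_mul_neg a z.length
      have hsum_nonneg : 0 ≤ ∑ j ∈ Finset.range z.length, a ^ j :=
        Finset.sum_nonneg fun j _ => pow_nonneg ha j
      nlinarith [pow_nonneg ha z.length]
    rw [mul_comm]
    exact (abs_larssonLeft_sub_le ha (fun w => hu (false, w)) (fun w => hu (true, w)) z).trans
      (mul_le_mul_of_nonneg_left hgeom hspread)
  rw [pairGap_append u q (p := (z, z)) (mem_levelPairs.2 ⟨rfl, rfl⟩)]
  refine (abs_add_le _ _).trans (add_le_add hz ?_)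
  rw [abs_mul, abs_of_nonneg (pow_nonneg ha _)]
  exact mul_le_of_le_one_right (pow_nonneg ha _) (abs_pairGap_le_one ha hb (fun _ => hu _) q)

theorem le_environmentLaw_abs_pairGap_append_zero (ha : 0 ≤ a)
    (hν : ∀ᵐ y ∂ν, y ∈ Set.Icc 0 (spread a b)) (hc : 0 ≤ c)
    (hνc : ENNReal.ofReal c • volume.restrict (Set.Icc 0 (spread a b)) ≤ ν)
    {p : LarssonWord × LarssonWord} {B η : ℝ} (hη : 0 ≤ η)
    (hp : ∀ u : Environment, (∀ c, u c ∈ Set.Icc 0 (spread a b)) → |pairGap a b u p| ≤ B) (x : ℝ) :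
    ENNReal.ofReal (c ^ 2 * (2 * η) * (spread a b - 2 * η - (a * B + |x|))) ≤
      environmentLaw ν {u | |pairGap a b u (p.1 ++ [0], p.2 ++ [0]) + x| ≤ η} := by
  set S := {u : Environment | |pairGap a b u (p.1 ++ [0], p.2 ++ [0]) + x| ≤ η}
  have hS : MeasurableSet S := measurableSet_abs_pairGap_add_le _ _ _
  have hmem : (([0], [0]) : LarssonWord × LarssonWord) ∈ levelPairs 1 := by simp [mem_levelPairs]
  have hsection (u' : Environment) (hu' : ∀ c, u' c ∈ Set.Icc 0 (spread a b)) :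
      ENNReal.ofReal (c ^ 2 * (2 * η) * (spread a b - 2 * η - (a * B + |x|))) ≤
        environmentLaw ν {u | glue 1 u u' ∈ S} := by
    set w := a * pairGap a b (u' ∘ descend ([0], [0])) p + x with hw
    have hw_le : |w| ≤ a * B + |x| := by
      refine (abs_add_le _ _).trans (add_le_add_left ?_ _)
      rw [abs_mul, abs_of_nonneg ha]
      exact mul_le_mul_of_nonneg_left (hp _ fun c => hu' _) ha
    have hset : {u | glue 1 u u' ∈ S} =
        (fun u : Environment => (u (false, [0]), u (true, [0]))) ⁻¹'
          {z | |z.1 - z.2 + w| ≤ η} := by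
      ext u
      have hroot : pairGap a b u ([0], [0]) = u (false, [0]) - u (true, [0]) := by
        simp [pairGap, larssonLeft]
      simp only [S, Set.mem_ofPred_eq, Set.mem_preimage, pairGap_glue_append u u' p hmem, hroot,
        hw, pow_one, add_assoc]
    have hpair : (false, [0]) ≠ ((true, [0]) : Bool × LarssonWord) := by simp
    rw [hset, ← Measure.map_apply (by fun_prop) (measurableSet_le (by fun_prop) measurable_const),
      Measure.infinitePi_map_eval_prod hpair]
    refine le_trans ?_ (ofReal_le_prod_abs_sub_add_le w hc hη hνc)
    gcongr
  rw [← environmentLaw_map_glue 1, Measure.map_apply (measurable_glue 1) hS,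
    Measure.prod_apply_symm (measurable_glue 1 hS)]
  calc _ = ∫⁻ _, ENNReal.ofReal (c ^ 2 * (2 * η) * (spread a b - 2 * η - (a * B + |x|)))
        ∂environmentLaw ν := by simp
    _ ≤ _ := lintegral_mono_ae <| by
      filter_upwards [ae_infinitePi_forall fun _ => hν] with u' hu' using hsection u' hu'

theorem integral_survivorCount (n : ℕ) :
    ∫ u, survivorCount a b κ n x u ∂environmentLaw ν =
      ∑ p ∈ levelPairs n, (environmentLaw ν).real {u | |pairGap a b u p + x| ≤ κ * a ^ n} := by
  have hmeas (p : LarssonWord × LarssonWord) :=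
    measurableSet_abs_pairGap_add_le (a := a) (b := b) p x (κ * a ^ n)
  simp only [survivorCount_eq_sum_indicator]
  rw [integral_finsetSum _ fun p _ => (integrable_indicator_iff (hmeas p)).2
    (integrable_const 1).integrableOn]
  exact Finset.sum_congr rfl fun p _ => integral_indicator_one (hmeas p)

theorem four_pow_mul_le_integral_survivorCount {l k : ℕ} {δ : ℝ}
    (h : ∀ q ∈ levelPairs l, δ ≤ (environmentLaw ν).real
      {u | |pairGap a b u (q.1 ++ List.replicate k 0, q.2 ++ List.replicate k 0) + x| ≤
        κ * a ^ (l + k)}) :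
    4 ^ l * δ ≤ ∫ u, survivorCount a b κ (l + k) x u ∂environmentLaw ν := by
  classical
  set z : LarssonWord := List.replicate k 0
  have hinj : Set.InjOn (fun q : LarssonWord × LarssonWord => (q.1 ++ z, q.2 ++ z))
      (levelPairs l) := by
    rintro ⟨q₁, q₂⟩ - ⟨q₁', q₂'⟩ - heq
    obtain ⟨h₁, h₂⟩ := Prod.mk.inj heq
    exact Prod.ext (List.append_cancel_right h₁) (List.append_cancel_right h₂)
  have hsub : (levelPairs l).image (fun q => (q.1 ++ z, q.2 ++ z)) ⊆ levelPairs (l + k) := by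
    refine Finset.image_subset_iff.2 fun q hq => ?_
    rw [mem_levelPairs] at *
    simp [z, hq]
  rw [integral_survivorCount]
  calc 4 ^ l * δ = ∑ _q ∈ levelPairs l, δ := by simp [card_levelPairs]
    _ ≤ _ := Finset.sum_le_sum h
    _ = ∑ p ∈ (levelPairs l).image fun q => (q.1 ++ z, q.2 ++ z),
          (environmentLaw ν).real {u | |pairGap a b u p + x| ≤ κ * a ^ (l + k)} := by
        rw [Finset.sum_image hinj]
    _ ≤ _ := Finset.sum_le_sum_of_subset_of_nonneg hsub fun _ _ _ => measureReal_nonneg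

end MeanGrowth

section UniformGrowth

variable {a b c : ℝ} {ν : Measure ℝ} [IsProbabilityMeasure ν]

theorem le_environmentLaw_abs_pairGap_append_replicate (ha : 0 ≤ a) (ha3 : a ≤ 1 / 3) (hb : 0 ≤ b)
    (hν : ∀ᵐ y ∂ν, y ∈ Set.Icc 0 (spread a b)) (hc : 0 ≤ c)
    (hνc : ENNReal.ofReal c • volume.restrict (Set.Icc 0 (spread a b)) ≤ ν) {k : ℕ}
    (hk : a ^ k ≤ spread a b / 16) {x : ℝ} (hx : |x| ≤ spread a b / 16)
    (q : LarssonWord × LarssonWord) (m : ℕ) :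
    c ^ 2 * spread a b ^ 2 / 32 * a ^ m ≤ (environmentLaw ν).real
      {u | |pairGap a b u (q.1 ++ List.replicate (k + 1) 0, q.2 ++ List.replicate (k + 1) 0) + x| ≤
        spread a b / 16 * a ^ m} := by
  have ht : 0 ≤ spread a b := by linarith [abs_nonneg x]
  have ham : a ^ m ≤ 1 := pow_le_one₀ ha (by linarith)
  have hbound (u : Environment) (hu : ∀ c, u c ∈ Set.Icc 0 (spread a b)) :
      |pairGap a b u (q.1 ++ List.replicate k 0, q.2 ++ List.replicate k 0)| ≤
        3 / 2 * spread a b + spread a b / 16 := by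
    refine (abs_pairGap_append_self_le ha ha3 hb hu q _).trans (add_le_add_right ?_ _)
    rwa [List.length_replicate]
  have hprob := le_environmentLaw_abs_pairGap_append_zero ha hν hc hνc
    (η := spread a b / 16 * a ^ m) (by positivity) hbound x
  simp only [List.append_assoc, ← List.replicate_succ'] at hprob
  refine le_trans ?_ ((ENNReal.ofReal_le_iff_le_toReal (measure_ne_top _ _)).1 hprob)
  have hroom : spread a b / 4 ≤ spread a b - 2 * (spread a b / 16 * a ^ m) -
      (a * (3 / 2 * spread a b + spread a b / 16) + |x|) := by
    nlinarith
  calc c ^ 2 * spread a b ^ 2 / 32 * a ^ m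
      = c ^ 2 * (2 * (spread a b / 16 * a ^ m)) * (spread a b / 4) := by ring
    _ ≤ _ := mul_le_mul_of_nonneg_left hroom (by positivity)

theorem exists_forall_four_le_integral_survivorCount (ha : 1 / 4 < a) (hb : 0 ≤ b)
    (hab : 3 * a + 2 * b < 1) (hν : ∀ᵐ y ∂ν, y ∈ Set.Icc 0 (spread a b)) (hc : 0 < c)
    (hνc : ENNReal.ofReal c • volume.restrict (Set.Icc 0 (spread a b)) ≤ ν) :
    ∃ N : ℕ, ∀ m ≥ N, ∀ y ∈ Set.Icc (-(spread a b / 16)) (spread a b / 16),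
      4 ≤ ∫ u, survivorCount a b (spread a b / 16) m y u ∂environmentLaw ν := by
  set t := spread a b with ht_def
  have ht : 0 < t := by rw [ht_def, spread]; linarith
  have ha0 : 0 < a := by linarith
  have ha3 : a ≤ 1 / 3 := by linarith
  obtain ⟨k, hk⟩ := exists_pow_lt_of_lt_one (show 0 < t / 16 by positivity) (show a < 1 by linarith)
  set C := c ^ 2 * t ^ 2 / 32 * a ^ (k + 1)
  have hC : 0 < C := by positivity
  obtain ⟨L, hL⟩ := pow_unbounded_of_one_lt (4 / C) (show 1 < 4 * a by linarith)
  refine ⟨L + (k + 1), fun m hm y hy => ?_⟩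
  obtain ⟨l, rfl⟩ := Nat.exists_eq_add_of_le' hm
  rw [← Nat.add_assoc]
  calc (4 : ℝ) ≤ C * (4 * a) ^ (l + L) := by
        rw [mul_comm, ← div_le_iff₀ hC]
        exact hL.le.trans (pow_le_pow_right₀ (by linarith) (by omega))
    _ = 4 ^ (l + L) * (c ^ 2 * t ^ 2 / 32 * a ^ (l + L + (k + 1))) := by
        simp only [C]
        ring
    _ ≤ _ := four_pow_mul_le_integral_survivorCount fun q _ =>
        le_environmentLaw_abs_pairGap_append_replicate ha0.le ha3 hb hν hc.le hνc hk.le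
          (abs_le.2 hy) q _

theorem exists_forall_environmentLaw_survivorCount_le (ha : 1 / 4 < a) (hb : 0 ≤ b)
    (hab : 3 * a + 2 * b < 1) (hν : ∀ᵐ y ∂ν, y ∈ Set.Icc 0 (spread a b)) (hc : 0 < c)
    (hνc : ENNReal.ofReal c • volume.restrict (Set.Icc 0 (spread a b)) ≤ ν) :
    ∃ m : ℕ, m ≠ 0 ∧ ∃ s > (0 : ℝ), ∀ j l : ℕ, m ≤ l → l < 2 * m →
      ∀ x ∈ Set.Icc (-(spread a b / 16)) (spread a b / 16),
        (environmentLaw ν).real {u | survivorCount a b (spread a b / 16) (j * m + l) x u ≤ 2 ^ j} ≤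
          Real.exp (-s) := by
  obtain ⟨N, hN⟩ := exists_forall_four_le_integral_survivorCount ha hb hab hν hc hνc
  set κ := spread a b / 16 with hκ
  have hκ1 : κ < 1 := by rw [hκ, spread]; linarith
  set m := max N 1
  set s₀ : ℝ := (4 ^ (2 * m))⁻¹
  have hs₀_pos : 0 < s₀ := by positivity
  have hmgf : ∀ l, m ≤ l → l ≤ 2 * m → ∀ s ∈ Set.Icc 0 s₀, ∀ y ∈ Set.Icc (-κ) κ,
      mgf (survivorCount a b κ l y) (environmentLaw ν) (-s) ≤ Real.exp (-(2 * s)) := by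
    intro l hml hlm s hs y hy
    have hs4 : s * 4 ^ l ≤ 1 := by
      calc s * 4 ^ l ≤ s₀ * 4 ^ (2 * m) := by
            gcongr
            · exact hs.2
            · norm_num
        _ = 1 := inv_mul_cancel₀ (by positivity)
    refine (mgf_neg_le_exp_of_mem_Icc measurable_survivorCount.aemeasurable
      (.of_forall survivorCount_mem_Icc) hs.1 hs4).trans (Real.exp_le_exp.2 (neg_le_neg ?_))
    nlinarith [hN l ((le_max_left N 1).trans hml) y hy, hs.1]
  refine ⟨m, by positivity, s₀, hs₀_pos, fun j l hml hlm x hx => ?_⟩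
  calc _ ≤ Real.exp (-(-(s₀ / 2 ^ j)) * 2 ^ j) *
        mgf (survivorCount a b κ (j * m + l) x) (environmentLaw ν) (-(s₀ / 2 ^ j)) :=
        measure_le_le_exp_mul_mgf _ (neg_nonpos.2 (by positivity))
          (integrable_exp_mul_survivorCount measurable_id _)
    _ ≤ Real.exp s₀ * Real.exp (-(2 * s₀)) := by
        rw [neg_neg, div_mul_cancel₀ _ (by positivity)]
        gcongr
        exact (mgf_survivorCount_mul_add_le (by linarith) (by linarith) hb hκ1 hν
          (hmgf m le_rfl (by omega)) ⟨hs₀_pos.le, le_rfl⟩ j l).trans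
            (hmgf l hml hlm.le s₀ ⟨hs₀_pos.le, le_rfl⟩ x hx)
    _ = Real.exp (-s₀) := by rw [← Real.exp_add]; ring_nf

theorem exists_forall_le_environmentLaw_lt_survivorCount (ha : 1 / 4 < a) (hb : 0 ≤ b)
    (hab : 3 * a + 2 * b < 1) (hν : ∀ᵐ y ∂ν, y ∈ Set.Icc 0 (spread a b)) (hc : 0 < c)
    (hνc : ENNReal.ofReal c • volume.restrict (Set.Icc 0 (spread a b)) ≤ ν) :
    ∃ ρ : ℝ, 1 < ρ ∧ ∃ η > (0 : ℝ), ∃ r > (0 : ℝ), ∃ N : ℕ, ∀ n ≥ N,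
      ∀ x ∈ Set.Icc (-(spread a b / 16)) (spread a b / 16),
        ENNReal.ofReal r ≤
          environmentLaw ν {u | η * ρ ^ n < survivorCount a b (spread a b / 16) n x u} := by
  obtain ⟨m, hm, s, hs, hsmall⟩ :=
    exists_forall_environmentLaw_survivorCount_le ha hb hab hν hc hνc
  obtain ⟨ρ, hρ, η, hη, hgrowth⟩ := exists_geometric_le_two_pow hm
  refine ⟨ρ, hρ, η, hη, 1 - Real.exp (-s), by simpa, m, fun n hn x hx => ?_⟩
  obtain ⟨j, l, hml, hlm, rfl⟩ : ∃ j l, m ≤ l ∧ l < 2 * m ∧ n = j * m + l := by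
    have hmod := Nat.mod_lt (n - m) (Nat.pos_of_ne_zero hm)
    have hdiv := Nat.div_add_mod' (n - m) m
    exact ⟨(n - m) / m, m + (n - m) % m, by omega, by omega, by omega⟩
  set Z := survivorCount a b (spread a b / 16) (j * m + l) x
  have hlarge : 1 - Real.exp (-s) ≤ (environmentLaw ν).real {u | 2 ^ j < Z u} := by
    have hcompl : {u | 2 ^ j < Z u} = {u | Z u ≤ 2 ^ j}ᶜ := by
      ext u
      simp only [Set.mem_compl_iff, Set.mem_ofPred_eq, not_le]
    rw [hcompl, probReal_compl_eq_one_sub (measurableSet_le measurable_survivorCount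
      measurable_const)]
    exact sub_le_sub_left (hsmall j l hml hlm x hx) 1
  refine ((ENNReal.ofReal_le_iff_le_toReal (measure_ne_top _ _)).2 hlarge).trans
    (measure_mono fun u hu => ?_)
  exact (hgrowth j l hlm).trans_lt hu

end UniformGrowth

theorem _root_.larsson_uniform_exponential_growth_general {a b c : ℝ} {ν : Measure ℝ}
    (ha : 1 / 4 < a) (hb : 0 ≤ b) (hab : 3 * a + 2 * b < 1)
    {Ω : Type*} [MeasurableSpace Ω] {P : Measure Ω} {U : Bool × LarssonWord → Ω → ℝ}
    (hUmeas : ∀ p, Measurable (U p)) (hUlaw : ∀ p, P.map (U p) = ν) (hUindep : iIndepFun U P)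
    (hν : ∀ᵐ y ∂ν, y ∈ Set.Icc 0 (spread a b)) (hc : 0 < c)
    (hνc : ENNReal.ofReal c • volume.restrict (Set.Icc 0 (spread a b)) ≤ ν) :
    ∃ ρ : ℝ, 1 < ρ ∧ ∃ η > (0 : ℝ), ∃ r > (0 : ℝ), ∃ N : ℕ, ∃ K : ℝ,
      0 < K ∧ K < 1 / 8 ∧
      ∀ n ≥ N, ∀ x ∈ Set.Icc (-K) K,
        ENNReal.ofReal r ≤
          P {ω | η * ρ ^ n <
                  (larssonZ a b (fun w => U (false, w) ω) (fun w => U (true, w) ω) n x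
                    (Set.Icc (-K) K) : ℝ)} := by
  have hP : IsProbabilityMeasure P := hUindep.isProbabilityMeasure
  have hν_prob : IsProbabilityMeasure ν :=
    hUlaw (false, []) ▸ Measure.isProbabilityMeasure_map (hUmeas (false, [])).aemeasurable
  obtain ⟨ρ, hρ, η, hη, r, hr, N, h⟩ :=
    exists_forall_le_environmentLaw_lt_survivorCount ha hb hab hν hc hνc
  have hlaw : P.map (fun ω p => U p ω) = environmentLaw ν := by
    simp only [hUindep.map_fun_eq_infinitePi_map hUmeas, hUlaw]
  refine ⟨ρ, hρ, η, hη, r, hr, N, spread a b / 16, by rw [spread]; linarith,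
    by rw [spread]; linarith, fun n hn x hx => (h n hn x hx).trans_eq ?_⟩
  rw [← hlaw, Measure.map_apply (by fun_prop)
    (measurableSet_lt measurable_const measurable_survivorCount)]
  refine congrArg P (Set.ext fun ω => ?_)
  simp only [Set.mem_ofPred_eq, Set.mem_preimage,
    larssonZ_eq_card_survivors (show 0 < a by linarith) fun p => U p ω]
  rfl

end Larsson

/-- There exist `ρ > 1`, positive `η, r`, an integer `N` and `0 < K < 1/8` such that for
every `n ≥ N` and every `x ∈ [−K, K]`, the probability that `Z_n^x([−K,K]) > η·ρ^n` is at
least `r`. -/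
theorem larsson_uniform_exponential_growth
    (a b : ℝ) (ha : 1 / 4 < a) (hb : 0 < b) (hab : 3 * a + 2 * b < 1)
    {Ω : Type*} [MeasurableSpace Ω] (P : Measure Ω) [IsProbabilityMeasure P]
    (U : Bool × LarssonWord → Ω → ℝ)
    (hUmeas : ∀ p, Measurable (U p))
    (hUlaw : ∀ p, P.map (U p) =
      (ENNReal.ofReal ((1 - 3 * a - 2 * b) / 2))⁻¹ •
        volume.restrict (Set.Icc 0 ((1 - 3 * a - 2 * b) / 2)))
    (hUindep : iIndepFun U P) :
    ∃ ρ : ℝ, 1 < ρ ∧ ∃ η > (0 : ℝ), ∃ r > (0 : ℝ), ∃ N : ℕ, ∃ K : ℝ,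
      0 < K ∧ K < 1 / 8 ∧
      ∀ n ≥ N, ∀ x ∈ Set.Icc (-K) K,
        ENNReal.ofReal r ≤
          P {ω | η * ρ ^ n <
                  (larssonZ a b (fun w => U (false, w) ω) (fun w => U (true, w) ω) n x
                    (Set.Icc (-K) K) : ℝ)} := by
  have ht : 0 < Larsson.spread a b := half_pos (by linarith)
  refine larsson_uniform_exponential_growth_general ha hb.le hab hUmeas hUlaw hUindep
    ?_ (inv_pos.2 ht) ?_
  · exact Measure.ae_smul_measure (ae_restrict_mem measurableSet_Icc) _
  · rw [ENNReal.ofReal_inv_of_pos ht]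
    rfl
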